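/- Let b ≥ 3 and let Λ ⊆ ℝ^b be a countable additive subgroup. Then any two points [x], [y] of the period domain D are strongly equivalent: there exist k ≥ 1, generic positive three-dimensional subspaces W₁, …, W_k ⊆ ℝ^b, and points [x] = [x₁], [x₂], …, [x_{k+1}] = [y] in D such that [x_i], [x_{i+1}] ∈ T_{W_i} for each i = 1, …, k. -/

import Mathlib

noncomputable section

open scoped BigOperators

def eps {b : ℕ} (i : Fin b) : ℝ := if (i : ℕ) < 3 then 1 else -1

def bR {b : ℕ} (v w : Fin b → ℝ) : ℝ := ∑ i, eps i * v i * w i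

def qR {b : ℕ} (v : Fin b → ℝ) : ℝ := bR v v

def bC {b : ℕ} (z w : Fin b → ℂ) : ℂ := ∑ i, (eps i : ℂ) * z i * w i

def qC {b : ℕ} (z : Fin b → ℂ) : ℂ := bC z z

def conjVec {b : ℕ} (z : Fin b → ℂ) : Fin b → ℂ := fun i => (starRingEnd ℂ) (z i)

def rePart {b : ℕ} (z : Fin b → ℂ) : Fin b → ℝ := fun i => (z i).re
def imPart {b : ℕ} (z : Fin b → ℂ) : Fin b → ℝ := fun i => (z i).im

def cplx {b : ℕ} (v : Fin b → ℝ) : Fin b → ℂ := fun i => (v i : ℂ)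

def isPeriodVec {b : ℕ} (z : Fin b → ℂ) : Prop :=
  qC z = 0 ∧ 0 < (bC z (conjVec z)).re

instance projectivizationTopology (K V : Type*) [DivisionRing K] [AddCommGroup V] [Module K V]
    [TopologicalSpace V] : TopologicalSpace (Projectivization K V) :=
  inferInstanceAs (TopologicalSpace (Quotient (projectivizationSetoid K V)))

def periodDomain (b : ℕ) : Set (Projectivization ℂ (Fin b → ℂ)) :=
  {x | ∃ (z : Fin b → ℂ) (hz : z ≠ 0), Projectivization.mk ℂ z hz = x ∧ isPeriodVec z}

def Pspan {b : ℕ} (z : Fin b → ℂ) : Submodule ℝ (Fin b → ℝ) :=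
  Submodule.span ℝ {rePart z, imPart z}

def PosDefOn {b : ℕ} (W : Submodule ℝ (Fin b → ℝ)) : Prop :=
  ∀ v ∈ W, v ≠ 0 → 0 < qR v

def twistorLine {b : ℕ} (W : Submodule ℝ (Fin b → ℝ)) :
    Set (Projectivization ℂ (Fin b → ℂ)) :=
  {x | ∃ (z : Fin b → ℂ) (hz : z ≠ 0), Projectivization.mk ℂ z hz = x ∧ isPeriodVec z ∧
    rePart z ∈ W ∧ imPart z ∈ W}

/-- `W^⊥ ∩ Λ = {0}`: the twistor line / three-space `W` is generic w.r.t. `Λ`. -/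
def IsGenericW {b : ℕ} (Λ : AddSubgroup (Fin b → ℝ)) (W : Submodule ℝ (Fin b → ℝ)) : Prop :=
  ∀ α ∈ Λ, (∀ w ∈ W, bR α w = 0) → α = 0

def bRlin {b : ℕ} (p : Fin b → ℝ) : (Fin b → ℝ) →ₗ[ℝ] ℝ where
  toFun v := bR v p
  map_add' x y := by
    unfold bR
    rw [← Finset.sum_add_distrib]
    exact Finset.sum_congr rfl fun i _ => by simp [Pi.add_apply]; ring
  map_smul' c x := by
    show bR (c • x) p = (RingHom.id ℝ) c • bR x p
    unfold bR
    rw [RingHom.id_apply, smul_eq_mul, Finset.mul_sum]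
    exact Finset.sum_congr rfl fun i _ => by simp [Pi.smul_apply]; ring

def perpSubmodule {b : ℕ} (P : Submodule ℝ (Fin b → ℝ)) : Submodule ℝ (Fin b → ℝ) :=
  ⨅ p ∈ P, LinearMap.ker (bRlin p)

/-!
A point of the period domain is an oriented positive plane, and it lies on `T_W` exactly when this
plane is contained in `W`; so two twistor lines meet as soon as the three-spaces share a plane.

Fix a generic positive three-space `V`. Let `u, v` be an orthogonal basis of the plane of a point,
and use `dim V = 3` to choose `f, g, k ∈ V` with `f ⟂ u, v`, then `g ⟂ u, f`, then `k ⟂ f, g`. The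
orthogonal triples `(u, v, f)`, `(u, g, f)` and `(g, k, f)` span positive three-spaces, and they
still do when `f` is replaced by a nearby vector `c`. By Baire's theorem `c` can be chosen
orthogonal to no nonzero element of `Λ`, so that all three spaces become generic. The planes
`⟨u, v⟩, ⟨u, c⟩, ⟨g, c⟩, ⟨g, k⟩` then form a chain from the given point to `T_V`, and any two such
chains are joined by `T_V` itself.
-/

theorem exists_fin_chain_of_transGen {α : Type*} {r : α → α → Prop} {x y : α}
    (h : Relation.TransGen r x y) :
    ∃ k : ℕ, 1 ≤ k ∧ ∃ c : Fin (k + 1) → α,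
      c 0 = x ∧ c (Fin.last k) = y ∧ ∀ i : Fin k, r (c i.castSucc) (c i.succ) := by
  induction h with
  | single hxy =>
    refine ⟨1, le_rfl, ![x, _], rfl, rfl, fun i => ?_⟩
    rw [Subsingleton.elim i 0]
    exact hxy
  | @tail y z _ hyz ih =>
    obtain ⟨k, -, c, rfl, rfl, hc⟩ := ih
    refine ⟨k + 1, Nat.le_add_left 1 k, Fin.snoc (α := fun _ => α) c z,
      Fin.snoc_castSucc (α := fun _ => α) z c 0, Fin.snoc_last (α := fun _ => α) z c,
      Fin.lastCases ?_ fun i => ?_⟩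
    · simpa only [Fin.succ_last, Fin.snoc_castSucc, Fin.snoc_last] using hyz
    · simpa only [Fin.succ_castSucc, Fin.snoc_castSucc] using hc i

theorem exists_mem_ne_zero_forall_apply_eq_zero {𝕜 E ι : Type*} [Field 𝕜] [AddCommGroup E]
    [Module 𝕜 E] [Fintype ι] {W : Submodule 𝕜 E} (hW : Fintype.card ι < Module.finrank 𝕜 W)
    (f : ι → E →ₗ[𝕜] 𝕜) : ∃ w ∈ W, w ≠ 0 ∧ ∀ i, f i w = 0 := by
  have : FiniteDimensional 𝕜 W := Module.finite_of_finrank_pos (by lia)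
  have hker : LinearMap.ker (LinearMap.pi f ∘ₗ W.subtype) ≠ ⊥ :=
    LinearMap.ker_ne_bot_of_finrank_lt (by rwa [Module.finrank_fintype_fun_eq_card])
  obtain ⟨w, hw, hw0⟩ := Submodule.exists_mem_ne_zero_of_ne_bot hker
  exact ⟨w, w.2, by simpa using hw0, fun i => congrFun hw i⟩

theorem dense_setOf_forall_apply_eq_zero_imp {𝕜 E : Type*} [NontriviallyNormedField 𝕜]
    [AddCommGroup E] [Module 𝕜 E] [TopologicalSpace E] [ContinuousAdd E] [ContinuousSMul 𝕜 E]
    [BaireSpace E] {S : Set (E →L[𝕜] 𝕜)} (hS : S.Countable) :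
    Dense {c : E | ∀ f ∈ S, f c = 0 → f = 0} := by
  have hset : {c : E | ∀ f ∈ S, f c = 0 → f = 0} =
      ⋂ f ∈ S \ {0}, (f.ker : Set E)ᶜ := by
    ext c
    simp only [Set.mem_ofPred_eq, Set.mem_iInter, Set.mem_sdiff, Set.mem_singleton_iff,
      Set.mem_compl_iff, SetLike.mem_coe, LinearMap.mem_ker]
    exact ⟨fun h f hf hc => hf.2 (h f hf.1 hc),
      fun h f hf hc => by_contra fun h0 => h f ⟨hf, h0⟩ hc⟩
  rw [hset]
  refine dense_biInter_of_isOpen (fun f _ => f.isClosed_ker.isOpen_compl)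
    (hS.mono Set.sdiff_subset) fun f hf => ?_
  rw [← interior_eq_empty_iff_dense_compl, ← Set.not_nonempty_iff_eq_empty]
  intro hint
  refine hf.2 (ContinuousLinearMap.coe_injective (LinearMap.ker_eq_top.mp ?_))
  exact Submodule.eq_top_of_nonempty_interior' _ hint

section PositiveFrame

variable {E ι κ : Type*} [AddCommGroup E] [Module ℝ E] {B : LinearMap.BilinForm ℝ E}

/-- A positive frame of a real bilinear form `B`: a linearly independent family on whose span `B`
is positive definite. Positive planes and three-spaces are handled through such bases, since the
condition on a finite family is open (`isOpen_setOf_isPositiveFrame`). -/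
structure IsPositiveFrame (B : LinearMap.BilinForm ℝ E) (v : ι → E) : Prop where
  linearIndependent : LinearIndependent ℝ v
  pos : ∀ w ∈ Submodule.span ℝ (Set.range v), w ≠ 0 → 0 < B w w

theorem isPositiveFrame_iff_forall_sum [Fintype ι] {v : ι → E} :
    IsPositiveFrame B v ↔ ∀ t : ι → ℝ, t ≠ 0 → 0 < B (∑ i, t i • v i) (∑ i, t i • v i) := by
  constructor
  · rintro ⟨hli, hpos⟩ t ht
    refine hpos _ ((Submodule.mem_span_range_iff_exists_fun ℝ).mpr ⟨t, rfl⟩) fun h0 => ht ?_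
    exact funext (Fintype.linearIndependent_iff.mp hli t h0)
  · intro h
    refine ⟨Fintype.linearIndependent_iff.mpr fun t ht => ?_, fun w hw hw0 => ?_⟩
    · by_contra! hne
      exact (h t (Function.ne_iff.mpr hne)).ne' (by simp [ht])
    · obtain ⟨t, rfl⟩ := (Submodule.mem_span_range_iff_exists_fun ℝ).mp hw
      refine h t fun ht => hw0 ?_
      simp [ht]

theorem IsPositiveFrame.comp {v : ι → E} (hv : IsPositiveFrame B v) {f : κ → ι}
    (hf : Function.Injective f) : IsPositiveFrame B (v ∘ f) :=
  ⟨hv.linearIndependent.comp f hf,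
    fun w hw => hv.pos w (Submodule.span_mono (Set.range_comp_subset_range f v) hw)⟩

theorem isPositiveFrame_of_pairwise_orthogonal [Finite ι] {v : ι → E}
    (hpos : ∀ i, 0 < B (v i) (v i)) (hortho : Pairwise fun i j => B (v i) (v j) = 0) :
    IsPositiveFrame B v := by
  cases nonempty_fintype ι
  refine isPositiveFrame_iff_forall_sum.mpr fun t ht => ?_
  have hsum : B (∑ i, t i • v i) (∑ i, t i • v i) = ∑ i, t i ^ 2 * B (v i) (v i) := by
    simp only [map_sum, LinearMap.sum_apply, map_smul, LinearMap.smul_apply, smul_eq_mul]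
    refine Finset.sum_congr rfl fun i _ => ?_
    rw [Finset.sum_eq_single i (fun j _ hj => by rw [hortho hj]; ring) (by simp)]
    ring
  obtain ⟨i, hi⟩ := Function.ne_iff.mp ht
  rw [hsum]
  exact Finset.sum_pos' (fun j _ => mul_nonneg (sq_nonneg _) (hpos j).le)
    ⟨i, Finset.mem_univ i, mul_pos (sq_pos_of_ne_zero hi) (hpos i)⟩

theorem isPositiveFrame_triple_of_orthogonal (hB : B.IsSymm) {a d f : E} (ha : 0 < B a a)
    (hd : 0 < B d d) (hf : 0 < B f f) (had : B a d = 0) (haf : B a f = 0) (hdf : B d f = 0) :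
    IsPositiveFrame B ![a, d, f] := by
  refine isPositiveFrame_of_pairwise_orthogonal (fun i => ?_) fun i j hij => ?_
  · fin_cases i <;> assumption
  · have hda := hB.eq d a
    have hfa := hB.eq f a
    have hfd := hB.eq f d
    fin_cases i <;> fin_cases j <;> simp_all

variable [TopologicalSpace E] [ContinuousAdd E] [ContinuousSMul ℝ E]

theorem isOpen_setOf_isPositiveFrame [Finite ι] (hB : Continuous fun p : E × E => B p.1 p.2) :
    IsOpen {v : ι → E | IsPositiveFrame B v} := by
  cases nonempty_fintype ι
  have hsphere (v : ι → E) : IsPositiveFrame B v ↔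
      ∀ t ∈ Metric.sphere (0 : ι → ℝ) 1, 0 < B (∑ i, t i • v i) (∑ i, t i • v i) := by
    rw [isPositiveFrame_iff_forall_sum]
    refine ⟨fun h t ht => h t (ne_zero_of_mem_unit_sphere ⟨t, ht⟩), fun h t ht => ?_⟩
    have hunit : 0 < B (∑ i, (‖t‖⁻¹ • t) i • v i) (∑ i, (‖t‖⁻¹ • t) i • v i) :=
      h _ (by simpa using norm_smul_inv_norm (𝕜 := ℝ) ht)
    have hscale : ∑ i, (‖t‖⁻¹ • t) i • v i = ‖t‖⁻¹ • ∑ i, t i • v i := by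
      simp only [Pi.smul_apply, smul_assoc, Finset.smul_sum]
    simp only [hscale, map_smul, LinearMap.smul_apply, smul_eq_mul] at hunit
    have hinv : 0 < ‖t‖⁻¹ := inv_pos.mpr (norm_pos_iff.mpr ht)
    exact pos_of_mul_pos_right (pos_of_mul_pos_right hunit hinv.le) hinv.le
  have hcont : Continuous fun p : (ι → E) × (ι → ℝ) =>
      B (∑ i, p.2 i • p.1 i) (∑ i, p.2 i • p.1 i) :=
    hB.comp (f := fun p : (ι → E) × (ι → ℝ) => (∑ i, p.2 i • p.1 i, ∑ i, p.2 i • p.1 i))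
      (by fun_prop)
  simp only [hsphere]
  refine isOpen_iff_eventually.mpr fun v hv => ?_
  exact (isCompact_sphere 0 1).eventually_forall_of_forall_eventually fun t ht =>
    hcont.continuousAt.eventually_const_lt (hv t ht)

theorem isOpen_setOf_isPositiveFrame_triple (hB : Continuous fun p : E × E => B p.1 p.2)
    (a d : E) : IsOpen {c | IsPositiveFrame B ![a, d, c]} :=
  (isOpen_setOf_isPositiveFrame hB).preimage (f := fun c => ![a, d, c]) (by fun_prop)

theorem exists_isPositiveFrame_triples (hsymm : B.IsSymm)
    (hcont : Continuous fun p : E × E => B p.1 p.2) {V : Submodule ℝ E}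
    (hV : 2 < Module.finrank ℝ V) (hpos : ∀ w ∈ V, w ≠ 0 → 0 < B w w) {u v : E}
    (hu : 0 < B u u) (hv : 0 < B v v) (huv : B u v = 0) {S : Set E} (hS : Dense S) :
    ∃ g ∈ V, ∃ k ∈ V, ∃ c ∈ S, IsPositiveFrame B ![u, v, c] ∧
      IsPositiveFrame B ![u, g, c] ∧ IsPositiveFrame B ![g, k, c] := by
  have exists_orthogonal (p q : E) : ∃ f ∈ V, 0 < B f f ∧ B p f = 0 ∧ B q f = 0 := by
    obtain ⟨f, hfV, hf0, hf⟩ :=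
      exists_mem_ne_zero_forall_apply_eq_zero (by simpa using hV) ![B p, B q]
    exact ⟨f, hfV, hpos f hfV hf0, hf 0, hf 1⟩
  obtain ⟨f, -, hf, huf, hvf⟩ := exists_orthogonal u v
  obtain ⟨g, hgV, hg, hug, hfg⟩ := exists_orthogonal u f
  obtain ⟨k, hkV, hk, hfk, hgk⟩ := exists_orthogonal f g
  have hgf : B g f = 0 := hsymm.eq g f ▸ hfg
  have hkf : B k f = 0 := hsymm.eq k f ▸ hfk
  have hopen : IsOpen ({c | IsPositiveFrame B ![u, v, c]} ∩
      ({c | IsPositiveFrame B ![u, g, c]} ∩ {c | IsPositiveFrame B ![g, k, c]})) :=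
    (isOpen_setOf_isPositiveFrame_triple hcont u v).inter
      ((isOpen_setOf_isPositiveFrame_triple hcont u g).inter
        (isOpen_setOf_isPositiveFrame_triple hcont g k))
  obtain ⟨c, ⟨huvc, hugc, hgkc⟩, hcS⟩ := hS.inter_open_nonempty _ hopen
    ⟨f, isPositiveFrame_triple_of_orthogonal hsymm hu hv hf huv huf hvf,
      isPositiveFrame_triple_of_orthogonal hsymm hu hg hf hug huf hgf,
      isPositiveFrame_triple_of_orthogonal hsymm hg hk hf hgk hgf hkf⟩
  exact ⟨g, hgV, k, hkV, c, hcS, huvc, hugc, hgkc⟩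

end PositiveFrame

section PeriodDomain

variable {b : ℕ}

theorem eps_ne_zero (i : Fin b) : eps i ≠ 0 := by
  unfold eps
  split_ifs <;> norm_num

theorem bR_comm (v w : Fin b → ℝ) : bR v w = bR w v :=
  Finset.sum_congr rfl fun _ _ => by ring

theorem bR_single_right (v : Fin b → ℝ) (i : Fin b) : bR v (Pi.single i 1) = eps i * v i := by
  simp [bR, Pi.single_apply]

/-- The bilinear form `⟨·, ·⟩` on `ℝ^b`: `bR` bundled as a bilinear form. -/
def periodForm (b : ℕ) : LinearMap.BilinForm ℝ (Fin b → ℝ) :=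
  LinearMap.mk₂ ℝ bR (fun v w p => (bRlin p).map_add v w) (fun r v p => (bRlin p).map_smul r v)
    (fun v w p => by simp only [bR_comm v]; exact (bRlin v).map_add w p)
    fun r v p => by simp only [bR_comm v]; exact (bRlin v).map_smul r p

theorem periodForm_apply (v w : Fin b → ℝ) : periodForm b v w = bR v w := rfl

theorem isSymm_periodForm : (periodForm b).IsSymm := ⟨bR_comm⟩

theorem continuous_periodForm :
    Continuous fun p : (Fin b → ℝ) × (Fin b → ℝ) => periodForm b p.1 p.2 := by
  simp only [periodForm_apply, bR]
  fun_prop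

theorem separatingLeft_periodForm : (periodForm b).SeparatingLeft := by
  intro v hv
  funext i
  have hi : eps i * v i = 0 := bR_single_right v i ▸ hv (Pi.single i 1)
  exact (mul_eq_zero.mp hi).resolve_left (eps_ne_zero i)

theorem dense_setOf_forall_bR_eq_zero_imp {S : Set (Fin b → ℝ)} (hS : S.Countable) :
    Dense {c : Fin b → ℝ | ∀ α ∈ S, bR α c = 0 → α = 0} := by
  let toDual (α : Fin b → ℝ) : (Fin b → ℝ) →L[ℝ] ℝ := (periodForm b α).toContinuousLinearMap
  refine (dense_setOf_forall_apply_eq_zero_imp (hS.image toDual)).mono fun c hc α hα hαc => ?_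
  have hdual : toDual α = 0 := hc _ (Set.mem_image_of_mem _ hα) hαc
  exact separatingLeft_periodForm α fun w => DFunLike.congr_fun hdual w

theorem exists_isPositiveFrame_periodForm (hb : 3 ≤ b) :
    ∃ v : Fin 3 → Fin b → ℝ, IsPositiveFrame (periodForm b) v := by
  refine ⟨fun i => Pi.single (Fin.castLE hb i) 1,
    isPositiveFrame_of_pairwise_orthogonal (fun i => ?_) fun i j hij => ?_⟩
  · simp [periodForm_apply, bR_single_right, eps]
  · have hne : Fin.castLE hb j ≠ Fin.castLE hb i := (Fin.castLE_injective hb).ne hij.symm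
    simp [periodForm_apply, bR_single_right, hne]

theorem qC_re (z : Fin b → ℂ) :
    (qC z).re = bR (rePart z) (rePart z) - bR (imPart z) (imPart z) := by
  simp [qC, bC, bR, rePart, imPart, ← Finset.sum_sub_distrib]

theorem qC_im (z : Fin b → ℂ) : (qC z).im = 2 * bR (rePart z) (imPart z) := by
  simp only [qC, bC, bR, rePart, imPart, Complex.im_sum, Finset.mul_sum]
  refine Finset.sum_congr rfl fun i _ => ?_
  simp only [Complex.mul_im, Complex.mul_re, Complex.ofReal_re, Complex.ofReal_im]
  ring

theorem bC_conjVec_re (z : Fin b → ℂ) :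
    (bC z (conjVec z)).re = bR (rePart z) (rePart z) + bR (imPart z) (imPart z) := by
  simp [bC, bR, rePart, imPart, conjVec, ← Finset.sum_add_distrib]

theorem isPeriodVec_iff (z : Fin b → ℂ) : isPeriodVec z ↔
    bR (rePart z) (rePart z) = bR (imPart z) (imPart z) ∧ bR (rePart z) (imPart z) = 0 ∧
      0 < bR (rePart z) (rePart z) := by
  rw [isPeriodVec, Complex.ext_iff, qC_re, qC_im, bC_conjVec_re, Complex.zero_re, Complex.zero_im]
  constructor
  · rintro ⟨⟨hre, him⟩, hpos⟩
    refine ⟨?_, ?_, ?_⟩ <;> linarith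
  · rintro ⟨heq, hortho, hpos⟩
    refine ⟨⟨?_, ?_⟩, ?_⟩ <;> linarith

theorem isPeriodVec.ne_zero {z : Fin b → ℂ} (hz : isPeriodVec z) : z ≠ 0 := by
  rintro rfl
  simpa [bC] using hz.2

theorem twistorLine_mono {W₁ W₂ : Submodule ℝ (Fin b → ℝ)} (h : W₁ ≤ W₂) :
    twistorLine W₁ ⊆ twistorLine W₂ := by
  rintro _ ⟨z, hz0, rfl, hz, hre, him⟩
  exact ⟨z, hz0, rfl, hz, h hre, h him⟩

theorem twistorLine_subset_periodDomain (W : Submodule ℝ (Fin b → ℝ)) :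
    twistorLine W ⊆ periodDomain b := by
  rintro _ ⟨z, hz0, rfl, hz, -, -⟩
  exact ⟨z, hz0, rfl, hz⟩

theorem twistorLine_nonempty_of_orthogonal {W : Submodule ℝ (Fin b → ℝ)} {a d : Fin b → ℝ}
    (haW : a ∈ W) (hdW : d ∈ W) (ha : 0 < bR a a) (hd : 0 < bR d d) (had : bR a d = 0) :
    (twistorLine W).Nonempty := by
  -- rescaling `a` and `d` to equal length makes the complex vector isotropic
  let z : Fin b → ℂ := fun i => ⟨√(bR d d) * a i, √(bR a a) * d i⟩
  have hre : rePart z = √(bR d d) • a := rfl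
  have him : imPart z = √(bR a a) • d := rfl
  have hz : isPeriodVec z := by
    rw [isPeriodVec_iff, hre, him]
    simp only [← periodForm_apply, map_smul, LinearMap.smul_apply, smul_eq_mul] at ha hd had ⊢
    rw [← mul_assoc, ← mul_assoc, Real.mul_self_sqrt ha.le, Real.mul_self_sqrt hd.le, had]
    exact ⟨mul_comm _ _, by simp, mul_pos hd ha⟩
  exact ⟨_, z, hz.ne_zero, rfl, hz, W.smul_mem _ haW, W.smul_mem _ hdW⟩

theorem twistorLine_nonempty {W : Submodule ℝ (Fin b → ℝ)} (hW : 1 < Module.finrank ℝ W)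
    (hpos : PosDefOn W) : (twistorLine W).Nonempty := by
  have hbot : W ≠ ⊥ := by
    rintro rfl
    simp at hW
  obtain ⟨a, haW, ha0⟩ := W.exists_mem_ne_zero_of_ne_bot hbot
  obtain ⟨d, hdW, hd0, had⟩ :=
    exists_mem_ne_zero_forall_apply_eq_zero (by simpa using hW) ![periodForm b a]
  exact twistorLine_nonempty_of_orthogonal haW hdW (hpos a haW ha0) (hpos d hdW hd0) (had 0)

theorem IsPositiveFrame.twistorLine_inter_nonempty {ι : Type*} {v : ι → Fin b → ℝ}
    (hv : IsPositiveFrame (periodForm b) v) {i j : ι} (hij : i ≠ j)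
    {W : Submodule ℝ (Fin b → ℝ)} (hi : v i ∈ W) (hj : v j ∈ W) :
    (twistorLine (Submodule.span ℝ (Set.range v)) ∩ twistorLine W).Nonempty := by
  have hinj : Function.Injective ![i, j] := by
    intro k l hkl
    fin_cases k <;> fin_cases l <;> simp_all
  have hplane := hv.comp hinj
  have hrank := finrank_span_eq_card hplane.linearIndependent
  refine (twistorLine_nonempty (by simp [hrank]) hplane.pos).mono
    (Set.subset_inter (twistorLine_mono ?_) (twistorLine_mono ?_))
  · exact Submodule.span_mono (Set.range_comp_subset_range _ v)
  · rw [Submodule.span_le, Set.range_subset_iff]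
    exact Fin.forall_fin_two.mpr ⟨hi, hj⟩

variable {Λ : AddSubgroup (Fin b → ℝ)}

/-- A generic positive three-space: a subspace `W` whose twistor line may appear in a chain
witnessing strong equivalence. -/
def IsGenericPositive (Λ : AddSubgroup (Fin b → ℝ)) (W : Submodule ℝ (Fin b → ℝ)) : Prop :=
  Module.finrank ℝ W = 3 ∧ PosDefOn W ∧ IsGenericW Λ W

theorem IsPositiveFrame.isGenericPositive_span {v : Fin 3 → Fin b → ℝ}
    (hv : IsPositiveFrame (periodForm b) v) {i : Fin 3} (hi : ∀ α ∈ Λ, bR α (v i) = 0 → α = 0) :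
    IsGenericPositive Λ (Submodule.span ℝ (Set.range v)) :=
  ⟨by simpa using finrank_span_eq_card hv.linearIndependent, hv.pos,
    fun α hα hperp => hi α hα (hperp _ (Submodule.subset_span (Set.mem_range_self i)))⟩

theorem exists_isGenericPositive (hb : 3 ≤ b) (hΛ : (Λ : Set (Fin b → ℝ)).Countable) :
    ∃ V, IsGenericPositive Λ V := by
  obtain ⟨v, hv⟩ := exists_isPositiveFrame_periodForm hb
  have hopen := isOpen_setOf_isPositiveFrame_triple (continuous_periodForm (b := b)) (v 0) (v 1)
  have hv' : IsPositiveFrame (periodForm b) ![v 0, v 1, v 2] := by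
    rwa [show ![v 0, v 1, v 2] = v from FinVec.etaExpand_eq v]
  obtain ⟨c, hc, hgen⟩ :=
    (dense_setOf_forall_bR_eq_zero_imp hΛ).inter_open_nonempty _ hopen ⟨v 2, hv'⟩
  exact ⟨_, hc.isGenericPositive_span (i := 2) hgen⟩

/-- Two points lie on a common generic twistor line: one step of a chain witnessing strong
equivalence. -/
def OnCommonGenericTwistorLine (Λ : AddSubgroup (Fin b → ℝ))
    (x y : Projectivization ℂ (Fin b → ℂ)) : Prop :=
  ∃ W, IsGenericPositive Λ W ∧ x ∈ twistorLine W ∧ y ∈ twistorLine W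

instance : Std.Symm (OnCommonGenericTwistorLine Λ) where
  symm _ _ := fun ⟨W, hW, hx, hy⟩ => ⟨W, hW, hy, hx⟩

/-- Strong equivalence of points of the period domain: being joined by a nonempty chain of generic
twistor lines. -/
def StronglyEquivalent (Λ : AddSubgroup (Fin b → ℝ)) :
    Projectivization ℂ (Fin b → ℂ) → Projectivization ℂ (Fin b → ℂ) → Prop :=
  Relation.TransGen (OnCommonGenericTwistorLine Λ)

theorem StronglyEquivalent.symm {x y : Projectivization ℂ (Fin b → ℂ)}
    (h : StronglyEquivalent Λ x y) : StronglyEquivalent Λ y x :=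
  symm_of (Relation.TransGen (OnCommonGenericTwistorLine Λ)) h

theorem exists_stronglyEquivalent_mem_twistorLine (hΛ : (Λ : Set (Fin b → ℝ)).Countable)
    {V : Submodule ℝ (Fin b → ℝ)} (hV : 2 < Module.finrank ℝ V) (hpos : PosDefOn V)
    {x : Projectivization ℂ (Fin b → ℂ)} (hx : x ∈ periodDomain b) :
    ∃ p ∈ twistorLine V, StronglyEquivalent Λ x p := by
  obtain ⟨z, hz0, rfl, hz⟩ := hx
  obtain ⟨huv, horth, hu⟩ := (isPeriodVec_iff z).mp hz
  obtain ⟨g, hgV, k, hkV, c, hgen, huvc, hugc, hgkc⟩ := exists_isPositiveFrame_triples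
    isSymm_periodForm continuous_periodForm hV hpos hu (hu.trans_eq huv) horth
    (dense_setOf_forall_bR_eq_zero_imp hΛ)
  have mem_span (v : Fin 3 → Fin b → ℝ) (i : Fin 3) : v i ∈ Submodule.span ℝ (Set.range v) :=
    Submodule.subset_span (Set.mem_range_self i)
  obtain ⟨p₁, hp₁, hp₁'⟩ := huvc.twistorLine_inter_nonempty (i := 0) (j := 2) (by decide)
    (mem_span ![rePart z, g, c] 0) (mem_span ![rePart z, g, c] 2)
  obtain ⟨p₂, hp₂, hp₂'⟩ := hugc.twistorLine_inter_nonempty (i := 1) (j := 2) (by decide)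
    (mem_span ![g, k, c] 0) (mem_span ![g, k, c] 2)
  obtain ⟨p₃, hp₃, hp₃'⟩ := hgkc.twistorLine_inter_nonempty (i := 0) (j := 1) (by decide) hgV hkV
  have hxp₁ : OnCommonGenericTwistorLine Λ (Projectivization.mk ℂ z hz0) p₁ :=
    ⟨_, huvc.isGenericPositive_span (i := 2) hgen,
      ⟨z, hz0, rfl, hz, mem_span _ 0, mem_span _ 1⟩, hp₁⟩
  have hp₁p₂ : OnCommonGenericTwistorLine Λ p₁ p₂ :=
    ⟨_, hugc.isGenericPositive_span (i := 2) hgen, hp₁', hp₂⟩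
  have hp₂p₃ : OnCommonGenericTwistorLine Λ p₂ p₃ :=
    ⟨_, hgkc.isGenericPositive_span (i := 2) hgen, hp₂', hp₃⟩
  exact ⟨p₃, hp₃', .tail (.tail (.single hxp₁) hp₁p₂) hp₂p₃⟩

theorem stronglyEquivalent_of_mem_periodDomain (hb : 3 ≤ b)
    (hΛ : (Λ : Set (Fin b → ℝ)).Countable) {x y : Projectivization ℂ (Fin b → ℂ)}
    (hx : x ∈ periodDomain b) (hy : y ∈ periodDomain b) : StronglyEquivalent Λ x y := by
  obtain ⟨V, hV⟩ := exists_isGenericPositive hb hΛ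
  have hrank : 2 < Module.finrank ℝ V := by simp [hV.1]
  obtain ⟨p, hpV, hxp⟩ := exists_stronglyEquivalent_mem_twistorLine hΛ hrank hV.2.1 hx
  obtain ⟨q, hqV, hyq⟩ := exists_stronglyEquivalent_mem_twistorLine hΛ hrank hV.2.1 hy
  exact (hxp.tail ⟨V, hV, hpV, hqV⟩).trans hyq.symm

end PeriodDomain

/-- any two points of the period domain are strongly equivalent, i.e.
connected by a chain of generic twistor lines. -/
theorem stmt9 (b : ℕ) (hb : 3 ≤ b) (Λ : AddSubgroup (Fin b → ℝ))
    (hΛ : (Λ : Set (Fin b → ℝ)).Countable)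
    (x y : Projectivization ℂ (Fin b → ℂ))
    (hx : x ∈ periodDomain b) (hy : y ∈ periodDomain b) :
    ∃ k : ℕ, 1 ≤ k ∧ ∃ (W : Fin k → Submodule ℝ (Fin b → ℝ))
      (c : Fin (k + 1) → Projectivization ℂ (Fin b → ℂ)),
      (∀ i, Module.finrank ℝ ↥(W i) = 3 ∧ PosDefOn (W i) ∧ IsGenericW Λ (W i)) ∧
      (∀ j, c j ∈ periodDomain b) ∧ c 0 = x ∧ c (Fin.last k) = y ∧
      ∀ i : Fin k, c i.castSucc ∈ twistorLine (W i) ∧ c i.succ ∈ twistorLine (W i) := by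
  obtain ⟨k, hk, c, rfl, hlast, hc⟩ :=
    exists_fin_chain_of_transGen (stronglyEquivalent_of_mem_periodDomain hb hΛ hx hy)
  choose W hW hmem using hc
  refine ⟨k, hk, W, c, hW, Fin.cases hx fun i => ?_, rfl, hlast, hmem⟩
  exact twistorLine_subset_periodDomain (W i) (hmem i).2
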